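/- Assume the number-field distortion setup, let y ≥ 2 be a real number, and suppose that δ_i = 0 for every index i with N(p_i) ≤ y. Then Σ_{j : 1 ≤ j ≤ J, N(p_j) ≤ y} M_j^{(1)} ≤ s · N(I_1)^{−1/2} · ∏_{𝔭 : N(𝔭) ≤ y} (1 − N(𝔭)^{−1/2})^{−1}, where the product is over all prime ideals 𝔭 of O_K with N(𝔭) ≤ y. -/

import Mathlib

/-!
For an index `j` with `N(p_j) ≤ y`, the distortion parameters `δ_1, …, δ_{j-1}` vanish, so `P_{j-1}`
is still the uniform measure, and averaging `α_j` over the fibres of `π_{j-1}` gives the density of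
`𝓑_j`. By the union bound this is at most the sum of `1 / N(I_i)` over the `i` with
`P_min(I_i) = p_j`. As `P_min` is unique, summing over `j` counts each `i` at most once, and only
those `i` for which every prime factor of `I_i` has norm at most `y`.

For such `i` and `0 < σ ≤ 1`, minimality of `N(I_1)` gives `1 / N(I_i) ≤ N(I_1)^(σ-1) N(I_i)^(-σ)`.
Each ideal occurs at most `s` times, and by unique factorization the sum of `N(I)^(-σ)` over
distinct ideals composed of primes of norm at most `y` is at most the partial Euler product. The
theorem is the case `σ = 1/2`.
-/

set_option maxHeartbeats 1000000
set_option synthInstance.maxHeartbeats 1000000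

open scoped Classical
open NumberField

/-- `p` is the unique prime ideal factor of `I` of largest norm. -/
def IsPmin {K : Type*} [Field K] [NumberField K] (I p : Ideal (𝓞 K)) : Prop :=
  p.IsPrime ∧ p ∣ I ∧ ∀ q : Ideal (𝓞 K), q.IsPrime → q ∣ I → q ≠ p →
    Ideal.absNorm q < Ideal.absNorm p

/-- A nonzero proper ideal is distinguishable if it has a unique prime factor of largest norm. -/
def Distinguishable {K : Type*} [Field K] [NumberField K] (I : Ideal (𝓞 K)) : Prop :=
  I ≠ ⊥ ∧ I ≠ ⊤ ∧ ∃ p : Ideal (𝓞 K), IsPmin I p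

section CosetDensity

variable {M S : Type*} [AddCommGroup M] [Fintype M] [SetLike S M]

lemma card_filter_sub_mem (H : S) (a : M) :
    ({x | x - a ∈ H} : Finset M).card = Nat.card H := by
  rw [Nat.card_eq_fintype_card, Fintype.card_subtype]
  exact Finset.card_equiv (Equiv.subRight a) fun x => by simp

/-- The relative density of `B` in the coset of `H` through `x`. For `M = O_K / Q`,
`H = Q_{j-1} / Q` and `B = 𝓑_j` it is the paper's `α_j(x)`. -/
noncomputable def cosetDensity (H : S) (B : Finset M) (x : M) : ℝ :=
  ((({x' | x' - x ∈ H} : Finset M) ∩ B).card : ℝ) / (({x' | x' - x ∈ H} : Finset M).card : ℝ)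

lemma cosetDensity_nonneg (H : S) (B : Finset M) (x : M) : 0 ≤ cosetDensity H B x := by
  unfold cosetDensity
  positivity

lemma sum_cosetDensity [AddSubgroupClass S M] (H : S) (B : Finset M) :
    ∑ x, cosetDensity H B x = B.card := by
  have double_count :
      ∑ x : M, (({x' | x' - x ∈ H} : Finset M) ∩ B).card = B.card * Nat.card H := by
    calc ∑ x : M, (({x' | x' - x ∈ H} : Finset M) ∩ B).card
        = ∑ x : M, (B.filter fun b => b - x ∈ H).card := by
          simp only [Finset.filter_inter, Finset.univ_inter]
      _ = ∑ b ∈ B, ({x | b - x ∈ H} : Finset M).card :=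
          Finset.sum_card_bipartiteAbove_eq_sum_card_bipartiteBelow fun x b => b - x ∈ H
      _ = B.card * Nat.card H := by
          have card_fibre (b : M) : ({x | b - x ∈ H} : Finset M).card = Nat.card H := by
            simpa only [sub_mem_comm_iff (b := b)] using card_filter_sub_mem H b
          simp only [card_fibre, Finset.sum_const, smul_eq_mul]
  have card_ne_zero : (Nat.card H : ℝ) ≠ 0 := by exact_mod_cast Nat.card_pos.ne'
  simp only [cosetDensity, card_filter_sub_mem]
  rw [← Finset.sum_div, ← Nat.cast_sum, double_count, Nat.cast_mul,
    mul_div_cancel_right₀ _ card_ne_zero]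

end CosetDensity

section ResidueClasses

variable {R : Type*} [CommRing R] {Q : Ideal R} [Fintype (R ⧸ Q)]

lemma dens_residueClass {I : Ideal R} (hQI : Q ≤ I) (a : R ⧸ Q) :
    ({x | x - a ∈ I.map (Ideal.Quotient.mk Q)} : Finset (R ⧸ Q)).dens =
      (Nat.card (R ⧸ I) : ℚ≥0)⁻¹ := by
  have card_quotient : Nat.card (R ⧸ Q) =
      Nat.card (I.map (Ideal.Quotient.mk Q)) * Nat.card (R ⧸ I) := by
    rw [Submodule.card_eq_card_quotient_mul_card (I.map (Ideal.Quotient.mk Q)),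
      Nat.card_congr (DoubleQuot.quotQuotEquivQuotOfLE hQI).toEquiv]
  have card_ne_zero : (Nat.card (I.map (Ideal.Quotient.mk Q)) : ℚ≥0) ≠ 0 := by
    exact_mod_cast Nat.card_pos.ne'
  rw [Finset.dens_eq_card_div_card, card_filter_sub_mem, ← Nat.card_eq_fintype_card, card_quotient,
    Nat.cast_mul, div_mul_cancel_left₀ card_ne_zero]

variable {ι : Type*} [Fintype ι] {I : ι → Ideal R} {a : ι → R ⧸ Q} {r : ι → Prop}
  {B : Finset (R ⧸ Q)}

lemma dens_le_sum_of_forall_exists_mem_residueClass (hQI : ∀ i, Q ≤ I i)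
    (hB : ∀ x ∈ B, ∃ i, r i ∧ x - a i ∈ (I i).map (Ideal.Quotient.mk Q)) :
    B.dens ≤ ∑ i with r i, (Nat.card (R ⧸ I i) : ℚ≥0)⁻¹ := by
  let C : ι → Finset (R ⧸ Q) := fun i => {x | x - a i ∈ (I i).map (Ideal.Quotient.mk Q)}
  have B_subset : B ⊆ ({i | r i} : Finset ι).biUnion C := fun x hx => by
    simpa [C] using hB x hx
  calc B.dens ≤ (({i | r i} : Finset ι).biUnion C).dens := Finset.dens_le_dens B_subset
    _ ≤ ∑ i with r i, (C i).dens := Finset.dens_biUnion_le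
    _ = ∑ i with r i, (Nat.card (R ⧸ I i) : ℚ≥0)⁻¹ := by simp only [C, dens_residueClass (hQI _)]

lemma uniform_firstMoment_le (H : Ideal (R ⧸ Q)) (hQI : ∀ i, Q ≤ I i)
    (hB : ∀ x ∈ B, ∃ i, r i ∧ x - a i ∈ (I i).map (Ideal.Quotient.mk Q)) :
    ∑ x, cosetDensity H B x * (1 / (Fintype.card (R ⧸ Q) : ℝ)) ≤
      ∑ i with r i, (Nat.card (R ⧸ I i) : ℝ)⁻¹ := by
  have dens_le : (B.dens : ℝ) ≤ ((∑ i with r i, (Nat.card (R ⧸ I i) : ℚ≥0)⁻¹ : ℚ≥0) : ℝ) :=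
    NNRat.cast_le.mpr (dens_le_sum_of_forall_exists_mem_residueClass hQI hB)
  rw [← Finset.sum_mul, sum_cosetDensity, mul_one_div, ← Finset.nnratCast_dens]
  simpa only [NNRat.cast_sum, NNRat.cast_inv, NNRat.cast_natCast] using dens_le

end ResidueClasses

section Distortion

variable {X : Type*}

/-- One distortion step: the passage from `P_{j-1}` to `P_j` for the relative density `α = α_j`,
the set `B = 𝓑_j` and the parameter `δ = δ_j`. The case `α x = 0` of the second formula is
separated because its denominator vanishes there. -/
noncomputable def distort (α : X → ℝ) (B : Finset X) (δ : ℝ) (P : X → ℝ) (x : X) : ℝ :=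
  if α x < δ then (if x ∈ B then 0 else P x / (1 - α x))
  else if α x = 0 then P x
  else P x * (α x - (if x ∈ B then δ else 0)) / (α x * (1 - δ))

lemma distort_zero {α : X → ℝ} {x : X} (hα : 0 ≤ α x) (B : Finset X) (P : X → ℝ) :
    distort α B 0 P x = P x := by
  rw [distort, if_neg hα.not_gt, ite_self, sub_zero, sub_zero, mul_one]
  split_ifs with hαx
  · rfl
  · exact mul_div_cancel_right₀ _ hαx

lemma eq_initial_of_distort_zero {α : ℕ → X → ℝ} {B : ℕ → Finset X} {δ : ℕ → ℝ} {P : ℕ → X → ℝ}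
    {k : ℕ} (hα : ∀ j ∈ Finset.Icc 1 k, ∀ x, 0 ≤ α j x) (hδ : ∀ j ∈ Finset.Icc 1 k, δ j = 0)
    (hP : ∀ j ∈ Finset.Icc 1 k, ∀ x, P j x = distort (α j) (B j) (δ j) (P (j - 1)) x) (x : X) :
    P k x = P 0 x := by
  induction k with
  | zero => rfl
  | succ k ih =>
    have mem_last : k + 1 ∈ Finset.Icc 1 (k + 1) := by simp
    have mem_of_mem : ∀ j ∈ Finset.Icc 1 k, j ∈ Finset.Icc 1 (k + 1) :=
      Finset.Icc_subset_Icc_right k.le_succ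
    rw [hP _ mem_last, hδ _ mem_last, distort_zero (hα _ mem_last x), Nat.add_sub_cancel]
    exact ih (fun j hj => hα j (mem_of_mem j hj)) (fun j hj => hδ j (mem_of_mem j hj))
      (fun j hj => hP j (mem_of_mem j hj))

lemma eq_initial_of_distort_zero_of_le {β : Type*} [Preorder β] {α : ℕ → X → ℝ}
    {B : ℕ → Finset X} {δ : ℕ → ℝ} {P : ℕ → X → ℝ} {J : ℕ} {w : ℕ → β} {y : β}
    (hw : MonotoneOn w (Finset.Icc 1 J)) (hα : ∀ j ∈ Finset.Icc 1 J, ∀ x, 0 ≤ α j x)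
    (hδ : ∀ j ∈ Finset.Icc 1 J, w j ≤ y → δ j = 0)
    (hP : ∀ j ∈ Finset.Icc 1 J, ∀ x, P j x = distort (α j) (B j) (δ j) (P (j - 1)) x)
    {j : ℕ} (hj : j ∈ Finset.Icc 1 J) (hjy : w j ≤ y) (x : X) : P (j - 1) x = P 0 x := by
  have earlier_mem : ∀ i ∈ Finset.Icc 1 (j - 1), i ∈ Finset.Icc 1 J := fun i hi => by grind
  have earlier_le : ∀ i ∈ Finset.Icc 1 (j - 1), w i ≤ y := fun i hi =>
    (hw (earlier_mem i hi) hj (by grind)).trans hjy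
  exact eq_initial_of_distort_zero (fun i hi => hα i (earlier_mem i hi))
    (fun i hi => hδ i (earlier_mem i hi) (earlier_le i hi)) (fun i hi => hP i (earlier_mem i hi)) x

end Distortion

section FiniteSums

variable {ι κ M : Type*} [AddCommMonoid M]

lemma sum_sum_filter_eq_sum_filter_exists {s : Finset ι} {t : Finset κ} {r : ι → κ → Prop}
    (hr : ∀ i ∈ s, ∀ j ∈ t, ∀ j' ∈ t, r i j → r i j' → j = j') (f : ι → M) :
    ∑ j ∈ t, ∑ i ∈ s with r i j, f i = ∑ i ∈ s with ∃ j ∈ t, r i j, f i := by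
  rw [← Finset.sum_biUnion]
  · congr 1
    ext i
    simp only [Finset.mem_biUnion, Finset.mem_filter]
    tauto
  · intro j hj j' hj' hne
    refine Finset.disjoint_left.mpr fun i hi hi' => hne ?_
    rw [Finset.mem_filter] at hi hi'
    exact hr i hi.1 j hj j' hj' hi.2 hi'.2

lemma sum_comp_le_nsmul_sum_image [PartialOrder M] [IsOrderedAddMonoid M] {s : Finset ι}
    {g : ι → κ} {f : κ → M} (hf : ∀ b, 0 ≤ f b) {m : ℕ}
    (hm : ∀ b, (s.filter fun i => g i = b).card ≤ m) :
    ∑ i ∈ s, f (g i) ≤ m • ∑ b ∈ s.image g, f b := by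
  rw [Finset.sum_comp f g, Finset.smul_sum]
  exact Finset.sum_le_sum fun b _ => nsmul_le_nsmul_left (hf b) (hm b)

end FiniteSums

section EulerProduct

open UniqueFactorizationMonoid

lemma geom_sum_le_inv_one_sub {𝕜 : Type*} [Field 𝕜] [LinearOrder 𝕜] [IsStrictOrderedRing 𝕜]
    {x : 𝕜} (hx0 : 0 ≤ x) (hx1 : x < 1) (m : ℕ) : ∑ k ∈ Finset.range m, x ^ k ≤ (1 - x)⁻¹ := by
  rw [← one_div, le_div_iff₀ (sub_pos.mpr hx1), geom_sum_mul_neg]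
  exact sub_le_self 1 (pow_nonneg hx0 m)

variable {A : Type*} [CommMonoidWithZero A] [UniqueFactorizationMonoid A] [NormalizationMonoid A]
  [Subsingleton Aˣ]

lemma prod_pow_count_normalizedFactors {a : A} (ha : a ≠ 0) {T : Finset A}
    (hT : ∀ q ∈ normalizedFactors a, q ∈ T) : ∏ q ∈ T, q ^ (normalizedFactors a).count q = a := by
  rw [← Finset.prod_multiset_count_of_subset _ _ fun q hq => hT q (Multiset.mem_toFinset.mp hq)]
  exact associated_iff_eq.mp (prod_normalizedFactors ha)

lemma sum_le_prod_inv_one_sub {𝕜 : Type*} [Field 𝕜] [LinearOrder 𝕜] [IsStrictOrderedRing 𝕜]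
    {f : A →* 𝕜} (hf : ∀ a, 0 ≤ f a) {T S : Finset A} (hT : ∀ q ∈ T, f q < 1)
    (hS : ∀ a ∈ S, a ≠ 0 ∧ ∀ q ∈ normalizedFactors a, q ∈ T) :
    ∑ a ∈ S, f a ≤ ∏ q ∈ T, (1 - f q)⁻¹ := by
  -- Expanding the product over `T` of geometric series truncated at `m` produces every element of
  -- `S` once `m` exceeds all the exponents that occur in `S`.
  obtain ⟨m, hm⟩ : ∃ m, ∀ a ∈ S, ∀ q, (normalizedFactors a).count q < m :=
    ⟨S.sup (fun a => (normalizedFactors a).card) + 1, fun a ha q =>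
      Nat.lt_succ_of_le <| (Multiset.count_le_card q _).trans <|
        Finset.le_sup (f := fun a => (normalizedFactors a).card) ha⟩
  let E : Finset (T → ℕ) := Fintype.piFinset fun _ => Finset.range m
  let g : (T → ℕ) → A := fun e => ∏ q : T, (q : A) ^ e q
  have S_subset : S ⊆ E.image g := fun a ha => by
    refine Finset.mem_image.mpr ⟨fun q => (normalizedFactors a).count (q : A), ?_, ?_⟩
    · exact Fintype.mem_piFinset.mpr fun q => Finset.mem_range.mpr (hm a ha q)
    · exact (Finset.prod_coe_sort T fun q => q ^ (normalizedFactors a).count q).trans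
        (prod_pow_count_normalizedFactors (hS a ha).1 (hS a ha).2)
  calc ∑ a ∈ S, f a
      ≤ ∑ a ∈ E.image g, f a := Finset.sum_le_sum_of_subset_of_nonneg S_subset fun a _ _ => hf a
    _ ≤ ∑ e ∈ E, f (g e) := Finset.sum_image_le_of_nonneg fun a _ => hf a
    _ = ∏ q : T, ∑ k ∈ Finset.range m, f q ^ k := by
        simp only [g, map_prod, map_pow, Finset.prod_univ_sum, E]
    _ ≤ ∏ q : T, (1 - f q)⁻¹ :=
        Finset.prod_le_prod (fun q _ => Finset.sum_nonneg fun k _ => pow_nonneg (hf q) k)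
          fun q _ => geom_sum_le_inv_one_sub (hf q) (hT q q.2) m
    _ = ∏ q ∈ T, (1 - f q)⁻¹ := Finset.prod_coe_sort T fun q => (1 - f q)⁻¹

end EulerProduct

section NormWeight

variable {R : Type*} [CommRing R] [IsDedekindDomain R] [Module.Free ℤ R]

/-- The completely multiplicative weight `I ↦ N(I)^(-σ)` on ideals, the general term of the
Dedekind zeta function. For `σ ≠ 0` the zero ideal has weight `0 ^ (-σ) = 0`, so its Euler factor
is `1`. -/
noncomputable def normWeight (σ : ℝ) : Ideal R →* ℝ where
  toFun I := (Ideal.absNorm I : ℝ) ^ (-σ)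
  map_one' := by simp
  map_mul' I I' := by
    rw [map_mul, Nat.cast_mul, Real.mul_rpow (Nat.cast_nonneg _) (Nat.cast_nonneg _)]

lemma normWeight_nonneg (σ : ℝ) (I : Ideal R) : 0 ≤ normWeight σ I :=
  Real.rpow_nonneg (Nat.cast_nonneg _) _

lemma normWeight_lt_one {σ : ℝ} (hσ : 0 < σ) {I : Ideal R} (hI : I ≠ ⊤) : normWeight σ I < 1 := by
  change (Ideal.absNorm I : ℝ) ^ (-σ) < 1
  obtain h0 | hpos := Nat.eq_zero_or_pos (Ideal.absNorm I)
  · rw [h0, Nat.cast_zero, Real.zero_rpow (neg_ne_zero.mpr hσ.ne')]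
    exact one_pos
  · have one_lt : 1 < Ideal.absNorm I :=
      lt_of_le_of_ne hpos fun h => hI (Ideal.absNorm_eq_one_iff.mp h.symm)
    exact Real.rpow_lt_one_of_one_lt_of_neg (by exact_mod_cast one_lt) (neg_neg_of_pos hσ)

end NormWeight

lemma inv_le_rpow_mul_rpow {u v : ℝ} (hu : 0 < u) (huv : u ≤ v) {σ : ℝ} (hσ : σ ≤ 1) :
    v⁻¹ ≤ u ^ (σ - 1) * v ^ (-σ) := by
  have hv : 0 < v := hu.trans_le huv
  calc v⁻¹ = v ^ (σ - 1) * v ^ (-σ) := by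
        rw [← Real.rpow_add hv, ← Real.rpow_neg_one]
        ring_nf
    _ ≤ u ^ (σ - 1) * v ^ (-σ) := by
        gcongr ?_ * _
        exact Real.rpow_le_rpow_of_nonpos hu huv (sub_nonpos.mpr hσ)

section NumberField

variable {K : Type*} [Field K] [NumberField K]

lemma IsPmin.absNorm_le {I p q : Ideal (𝓞 K)} (hp : IsPmin I p) (hq : q.IsPrime) (hqI : q ∣ I) :
    Ideal.absNorm q ≤ Ideal.absNorm p := by
  obtain rfl | hne := eq_or_ne q p
  · exact le_rfl
  · exact (hp.2.2 q hq hqI hne).le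

lemma IsPmin.unique {I p q : Ideal (𝓞 K)} (hp : IsPmin I p) (hq : IsPmin I q) : p = q := by
  by_contra hne
  exact (hp.2.2 q hq.1 hq.2.1 (Ne.symm hne)).not_ge (hq.absNorm_le hp.1 hp.2.1)

lemma sum_normWeight_le_prod {σ : ℝ} (hσ : 0 < σ) {y : ℝ} {T S : Finset (Ideal (𝓞 K))}
    (hT : ∀ q : Ideal (𝓞 K), q ∈ T ↔ q.IsPrime ∧ (Ideal.absNorm q : ℝ) ≤ y)
    (hS : ∀ I ∈ S, I ≠ ⊥ ∧ ∃ p, IsPmin I p ∧ (Ideal.absNorm p : ℝ) ≤ y) :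
    ∑ I ∈ S, normWeight σ I ≤ ∏ q ∈ T, (1 - normWeight σ q)⁻¹ := by
  refine sum_le_prod_inv_one_sub (normWeight_nonneg σ)
    (fun q hq => normWeight_lt_one hσ ((hT q).mp hq).1.ne_top) fun I hI => ?_
  obtain ⟨hI0, p, hp, hpy⟩ := hS I hI
  refine ⟨hI0, fun q hq => (hT q).mpr ?_⟩
  have q_prime : q.IsPrime :=
    Ideal.isPrime_of_prime (UniqueFactorizationMonoid.prime_of_normalized_factor q hq)
  have norm_le : Ideal.absNorm q ≤ Ideal.absNorm p :=
    hp.absNorm_le q_prime (UniqueFactorizationMonoid.dvd_of_mem_normalizedFactors hq)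
  exact ⟨q_prime, (Nat.cast_le.mpr norm_le).trans hpy⟩

lemma sum_inv_absNorm_le {ι : Type*} {G : Finset ι} {I : ι → Ideal (𝓞 K)} {s : ℕ}
    (hs : ∀ I₀, (G.filter fun i => I i = I₀).card ≤ s) {N₁ : ℕ} (hN₁ : 0 < N₁)
    (hle : ∀ i ∈ G, N₁ ≤ Ideal.absNorm (I i)) {σ : ℝ} (hσ : 0 < σ) (hσ1 : σ ≤ 1) {y : ℝ}
    {T : Finset (Ideal (𝓞 K))}
    (hT : ∀ q : Ideal (𝓞 K), q ∈ T ↔ q.IsPrime ∧ (Ideal.absNorm q : ℝ) ≤ y)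
    (hG : ∀ i ∈ G, ∃ p, IsPmin (I i) p ∧ (Ideal.absNorm p : ℝ) ≤ y) :
    ∑ i ∈ G, (Ideal.absNorm (I i) : ℝ)⁻¹ ≤
      s * (N₁ : ℝ) ^ (σ - 1) * ∏ q ∈ T, (1 - (Ideal.absNorm q : ℝ) ^ (-σ))⁻¹ := by
  have image_smooth : ∀ J ∈ G.image I, J ≠ ⊥ ∧ ∃ p, IsPmin J p ∧ (Ideal.absNorm p : ℝ) ≤ y := by
    refine Finset.forall_mem_image.mpr fun i hi => ⟨?_, hG i hi⟩
    exact mt Ideal.absNorm_eq_zero_iff.mpr (hN₁.trans_le (hle i hi)).ne'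
  calc ∑ i ∈ G, (Ideal.absNorm (I i) : ℝ)⁻¹
      ≤ ∑ i ∈ G, (N₁ : ℝ) ^ (σ - 1) * normWeight σ (I i) := Finset.sum_le_sum fun i hi =>
        inv_le_rpow_mul_rpow (Nat.cast_pos.mpr hN₁) (Nat.cast_le.mpr (hle i hi)) hσ1
    _ = (N₁ : ℝ) ^ (σ - 1) * ∑ i ∈ G, normWeight σ (I i) := by rw [Finset.mul_sum]
    _ ≤ (N₁ : ℝ) ^ (σ - 1) * (s • ∑ J ∈ G.image I, normWeight σ J) := by
        gcongr
        exact sum_comp_le_nsmul_sum_image (normWeight_nonneg σ) hs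
    _ ≤ (N₁ : ℝ) ^ (σ - 1) * (s • ∏ q ∈ T, (1 - normWeight σ q)⁻¹) := by
        gcongr
        exact sum_normWeight_le_prod hσ hT image_smooth
    _ = s * (N₁ : ℝ) ^ (σ - 1) * ∏ q ∈ T, (1 - normWeight σ q)⁻¹ := by
        rw [nsmul_eq_mul]
        ring

theorem first_moment_sum_bound_general {ι : Type*} [Fintype ι] {Q : Ideal (𝓞 K)}
    [Fintype (𝓞 K ⧸ Q)] {I : ι → Ideal (𝓞 K)} (hQI : ∀ i, Q ≤ I i) {a : ι → 𝓞 K ⧸ Q}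
    {s : ℕ} (hs : ∀ I₀, (Finset.univ.filter fun i => I i = I₀).card ≤ s)
    {i₁ : ι} (hi₁ : ∀ i, Ideal.absNorm (I i₁) ≤ Ideal.absNorm (I i))
    {J : ℕ} {p : ℕ → Ideal (𝓞 K)} (hpinj : Set.InjOn p (Finset.Icc 1 J))
    (hpmono : MonotoneOn (fun j => Ideal.absNorm (p j)) (Finset.Icc 1 J))
    {B : ℕ → Finset (𝓞 K ⧸ Q)}
    (hB : ∀ j ∈ Finset.Icc 1 J, ∀ x ∈ B j, ∃ i, IsPmin (I i) (p j) ∧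
      x - a i ∈ (I i).map (Ideal.Quotient.mk Q))
    {H : ℕ → Ideal (𝓞 K ⧸ Q)} {α : ℕ → (𝓞 K ⧸ Q) → ℝ}
    (hα : ∀ j ∈ Finset.Icc 1 J, ∀ x, α j x = cosetDensity (H (j - 1)) (B j) x)
    {δ : ℕ → ℝ} {P : ℕ → (𝓞 K ⧸ Q) → ℝ}
    (hP0 : ∀ x, P 0 x = 1 / (Fintype.card (𝓞 K ⧸ Q) : ℝ))
    (hP : ∀ j ∈ Finset.Icc 1 J, ∀ x, P j x = distort (α j) (B j) (δ j) (P (j - 1)) x)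
    {y : ℝ} (hδ : ∀ j ∈ Finset.Icc 1 J, (Ideal.absNorm (p j) : ℝ) ≤ y → δ j = 0)
    {T : Finset (Ideal (𝓞 K))}
    (hT : ∀ q : Ideal (𝓞 K), q ∈ T ↔ q.IsPrime ∧ (Ideal.absNorm q : ℝ) ≤ y)
    {σ : ℝ} (hσ : 0 < σ) (hσ1 : σ ≤ 1) :
    ∑ j ∈ (Finset.Icc 1 J).filter (fun j => (Ideal.absNorm (p j) : ℝ) ≤ y),
        (∑ x, α j x * P (j - 1) x) ≤
      (s : ℝ) * (Ideal.absNorm (I i₁) : ℝ) ^ (σ - 1) *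
        ∏ q ∈ T, (1 - (Ideal.absNorm q : ℝ) ^ (-σ))⁻¹ := by
  have norm_pos : 0 < Ideal.absNorm (I i₁) :=
    Nat.pos_of_dvd_of_pos (Ideal.absNorm_dvd_absNorm_of_le (hQI i₁))
      (Nat.pos_of_ne_zero ((Ideal.absNorm_ne_zero_iff Q).mpr inferInstance))
  let t := (Finset.Icc 1 J).filter fun j => (Ideal.absNorm (p j) : ℝ) ≤ y
  have uniform : ∀ j ∈ t, ∀ x, P (j - 1) x = 1 / (Fintype.card (𝓞 K ⧸ Q) : ℝ) := by
    intro j hj x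
    rw [← hP0 x]
    exact eq_initial_of_distort_zero_of_le (Nat.mono_cast.comp_monotoneOn hpmono)
      (fun i hi x => hα i hi x ▸ cosetDensity_nonneg _ _ _) hδ hP
      (Finset.mem_filter.mp hj).1 (Finset.mem_filter.mp hj).2 x
  calc ∑ j ∈ t, ∑ x, α j x * P (j - 1) x
      ≤ ∑ j ∈ t, ∑ i with IsPmin (I i) (p j), (Ideal.absNorm (I i) : ℝ)⁻¹ := by
        refine Finset.sum_le_sum fun j hj => ?_
        have hjJ := (Finset.mem_filter.mp hj).1
        simp only [uniform j hj, hα j hjJ, Ideal.absNorm_apply, Submodule.cardQuot_apply]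
        exact uniform_firstMoment_le _ hQI (hB j hjJ)
    _ = ∑ i with ∃ j ∈ t, IsPmin (I i) (p j), (Ideal.absNorm (I i) : ℝ)⁻¹ :=
        sum_sum_filter_eq_sum_filter_exists (fun i _ j hj j' hj' h h' =>
          hpinj (Finset.mem_filter.mp hj).1 (Finset.mem_filter.mp hj').1 (h.unique h')) _
    _ ≤ _ := by
        refine sum_inv_absNorm_le (fun I₀ => (Finset.card_le_card ?_).trans (hs I₀)) norm_pos
          (fun i _ => hi₁ i) hσ hσ1 hT fun i hi => ?_
        · exact Finset.filter_subset_filter _ (Finset.subset_univ _)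
        · obtain ⟨j, hj, hij⟩ := (Finset.mem_filter.mp hi).2
          exact ⟨p j, hij, (Finset.mem_filter.mp hj).2⟩

end NumberField

/-- Bound for the sum of the first moments over indices with `N(p_j) ≤ y`. -/
theorem first_moment_sum_bound
    {K : Type*} [Field K] [NumberField K]
    (n : ℕ) (hn : 0 < n)
    (a : Fin n → 𝓞 K) (Idl : Fin n → Ideal (𝓞 K))
    (hdist : ∀ i : Fin n, Distinguishable (Idl i))
    (hmono : ∀ i j : Fin n, i ≤ j → Ideal.absNorm (Idl i) ≤ Ideal.absNorm (Idl j))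
    (s : ℕ)
    (hsle : ∀ I₀ : Ideal (𝓞 K), (Finset.univ.filter fun i : Fin n => Idl i = I₀).card ≤ s)
    (hseq : ∃ I₀ : Ideal (𝓞 K), (Finset.univ.filter fun i : Fin n => Idl i = I₀).card = s)
    (Q : Ideal (𝓞 K)) (hQ : Q = ⨅ i : Fin n, Idl i)
    (J : ℕ) (p : ℕ → Ideal (𝓞 K)) (ν : ℕ → ℕ)
    (hp : ∀ j ∈ Finset.Icc 1 J, (p j).IsPrime)
    (hν : ∀ j ∈ Finset.Icc 1 J, 1 ≤ ν j)
    (hpinj : ∀ j ∈ Finset.Icc 1 J, ∀ j' ∈ Finset.Icc 1 J, p j = p j' → j = j')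
    (hfact : Q = ∏ j ∈ Finset.Icc 1 J, p j ^ ν j)
    (hpmono : ∀ j ∈ Finset.Icc 1 J, ∀ j' ∈ Finset.Icc 1 J, j ≤ j' →
      Ideal.absNorm (p j) ≤ Ideal.absNorm (p j'))
    (Qp : ℕ → Ideal (𝓞 K)) (hQp : ∀ j : ℕ, Qp j = ∏ i ∈ Finset.Icc 1 j, p i ^ ν i)
    [Fintype (𝓞 K ⧸ Q)]
    (B : ℕ → Finset (𝓞 K ⧸ Q))
    (hB : ∀ j ∈ Finset.Icc 1 J, B j = Finset.univ.filter fun x : 𝓞 K ⧸ Q =>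
      ∃ i : Fin n, IsPmin (Idl i) (p j) ∧
        x - Ideal.Quotient.mk Q (a i) ∈ (Idl i).map (Ideal.Quotient.mk Q))
    (F : ℕ → (𝓞 K ⧸ Q) → Finset (𝓞 K ⧸ Q))
    (hF : ∀ (j : ℕ) (x : 𝓞 K ⧸ Q),
      F j x = Finset.univ.filter fun x' : 𝓞 K ⧸ Q => x' - x ∈ (Qp j).map (Ideal.Quotient.mk Q))
    (α : ℕ → (𝓞 K ⧸ Q) → ℝ)
    (hα : ∀ j ∈ Finset.Icc 1 J, ∀ x : 𝓞 K ⧸ Q,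
      α j x = ((F (j - 1) x ∩ B j).card : ℝ) / ((F (j - 1) x).card : ℝ))
    (δ : ℕ → ℝ) (hδ : ∀ j ∈ Finset.Icc 1 J, δ j ∈ Set.Icc (0 : ℝ) (1 / 2))
    (P : ℕ → (𝓞 K ⧸ Q) → ℝ)
    (hP0 : ∀ x : 𝓞 K ⧸ Q, P 0 x = 1 / (Fintype.card (𝓞 K ⧸ Q) : ℝ))
    (hPrec : ∀ j ∈ Finset.Icc 1 J, ∀ x : 𝓞 K ⧸ Q,
      P j x = if α j x < δ j then (if x ∈ B j then 0 else P (j - 1) x / (1 - α j x))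
        else if α j x = 0 then P (j - 1) x
        else P (j - 1) x * (α j x - (if x ∈ B j then δ j else 0)) / (α j x * (1 - δ j)))
    (y : ℝ) (hy : 2 ≤ y)
    (hδ0 : ∀ i ∈ Finset.Icc 1 J, (Ideal.absNorm (p i) : ℝ) ≤ y → δ i = 0)
    (PS : Finset (Ideal (𝓞 K)))
    (hPS : ∀ q : Ideal (𝓞 K), q ∈ PS ↔ q.IsPrime ∧ (Ideal.absNorm q : ℝ) ≤ y) :
    ∑ j ∈ (Finset.Icc 1 J).filter (fun j => (Ideal.absNorm (p j) : ℝ) ≤ y),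
        (∑ x : 𝓞 K ⧸ Q, α j x * P (j - 1) x) ≤
      (s : ℝ) * (Ideal.absNorm (Idl ⟨0, hn⟩) : ℝ) ^ (-(1 : ℝ) / 2) *
        ∏ q ∈ PS, (1 - (Ideal.absNorm q : ℝ) ^ (-(1 : ℝ) / 2))⁻¹ := by
  simpa only [neg_div, show (1 / 2 - 1 : ℝ) = -(1 / 2) by norm_num] using
    first_moment_sum_bound_general (H := fun j => (Qp j).map (Ideal.Quotient.mk Q))
      (a := fun i => Ideal.Quotient.mk Q (a i)) (fun i => hQ ▸ iInf_le Idl i) hsle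
      (fun i => hmono ⟨0, hn⟩ i (Nat.zero_le _)) (fun j hj j' => hpinj j hj j')
      (fun j hj j' => hpmono j hj j') (fun j hj x hx => by simpa [hB j hj] using hx)
      (fun j hj x => by rw [hα j hj x, hF, cosetDensity]) hP0 hPrec hδ0 hPS one_half_pos
      one_half_lt_one.le
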